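/- arXiv:1207.6861 — 5 statements merged into one kernel-verified Lean document; each statement's English description precedes it below -/
import Mathlib

section
/- The function 𝔄 is complex differentiable on all of ℂ (entire), and it solves the Airy equation: 𝔄''(z) = z·𝔄(z) for every z ∈ ℂ. -/
/-- The Airy-type function 𝔄, defined as the contour integral
`π^{-1/2} ∫_Γ exp(t³/3 − z·t) dt` over the contour Γ running from −∞ along the
negative real axis to 0 and then from 0 along the ray `e^{-iπ/3}·ℝ⁺`. -/
noncomputable def Afun (z : ℂ) : ℂ :=
  (Real.sqrt Real.pi : ℂ)⁻¹ *
    ((∫ s in Set.Ioi (0:ℝ), Complex.exp (-(s:ℂ)^3/3 + z * s)) +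
      Complex.exp (-(Real.pi * Complex.I)/3) *
        ∫ s in Set.Ioi (0:ℝ),
          Complex.exp (-(s:ℂ)^3/3 - Complex.exp (-(Real.pi * Complex.I)/3) * z * s))

/-! Put `H(z) = ∫₀^∞ exp(−s³/3 + z·s) ds`. As `(z − s²)·exp(−s³/3 + z·s)` is the derivative in
`s` of `exp(−s³/3 + z·s)`, which falls from `1` to `0` at infinity, integration gives
`H″(z) = z·H(z) + 1`. For a cube root of unity `ω` the function `ω·H(ω·z)` satisfies the same
equation, so in `H(z) − ω·H(ω·z)` the inhomogeneous terms cancel and it solves the Airy equation.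
With `ω = −e^{-iπ/3}` this is `𝔄` up to a constant. Nothing changes when `3` is replaced by `n + 1`
and `″` by the `n`-th derivative. -/

open MeasureTheory ProbabilityTheory Set Filter

section HyperScorer

/-- The function `∫₀^∞ exp(−sⁿ⁺¹/(n+1) + z·s) ds`, which is `π` times Scorer's function `Hi` for
`n = 2`. For `n = 0` the integral diverges when `1 ≤ re z`. -/
noncomputable def hyperScorer (n : ℕ) (z : ℂ) : ℂ :=
  ∫ s in Ioi (0 : ℝ), Complex.exp (-(s : ℂ) ^ (n + 1) / (n + 1) + z * s)

/-- The measure on the half-line with density `exp(−sⁿ⁺¹/(n+1))`. It makes `hyperScorer n` the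
complex moment generating function of the identity, so that Mathlib's results on differentiation
under the integral sign apply. -/
noncomputable def hyperScorerMeasure (n : ℕ) : Measure ℝ :=
  (volume.restrict (Ioi 0)).withDensity fun s ↦ ENNReal.ofReal (Real.exp (-s ^ (n + 1) / (n + 1)))

variable {n : ℕ} {E : Type*} [NormedAddCommGroup E] [NormedSpace ℝ E]

theorem integral_hyperScorerMeasure (n : ℕ) (f : ℝ → E) :
    ∫ s, f s ∂hyperScorerMeasure n =
      ∫ s in Ioi (0 : ℝ), Real.exp (-s ^ (n + 1) / (n + 1)) • f s := by
  rw [hyperScorerMeasure, integral_withDensity_eq_integral_toReal_smul (by fun_prop) (by simp)]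
  simp only [ENNReal.toReal_ofReal (Real.exp_nonneg _)]

theorem integrable_hyperScorerMeasure_iff {f : ℝ → E} :
    Integrable f (hyperScorerMeasure n) ↔
      IntegrableOn (fun s ↦ Real.exp (-s ^ (n + 1) / (n + 1)) • f s) (Ioi 0) := by
  rw [hyperScorerMeasure, integrable_withDensity_iff_integrable_smul' (by fun_prop) (by simp)]
  simp only [ENNReal.toReal_ofReal (Real.exp_nonneg _), IntegrableOn]

theorem exp_neg_pow_div_smul_cexp (n k : ℕ) (z : ℂ) (s : ℝ) :
    Real.exp (-s ^ (n + 1) / (n + 1)) • ((s : ℂ) ^ k * Complex.exp (z * s)) =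
      (s : ℂ) ^ k * Complex.exp (-(s : ℂ) ^ (n + 1) / (n + 1) + z * s) := by
  rw [Complex.exp_add, Complex.real_smul]
  push_cast
  ring

theorem complexMGF_hyperScorerMeasure (n : ℕ) :
    complexMGF id (hyperScorerMeasure n) = hyperScorer n := by
  ext z
  simpa [complexMGF, hyperScorer, integral_hyperScorerMeasure] using
    integral_congr_ae (.of_forall fun s ↦ exp_neg_pow_div_smul_cexp n 0 z s)

theorem tendsto_neg_pow_div_add_mul_atBot (hn : n ≠ 0) (t : ℝ) :
    Tendsto (fun s : ℝ ↦ -s ^ (n + 1) / (n + 1) + t * s) atTop atBot := by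
  have hfactor : Tendsto (fun s : ℝ ↦ t + -(s ^ n / (n + 1))) atTop atBot :=
    tendsto_atBot_add_const_left _ t <| tendsto_neg_atTop_atBot.comp <|
      (tendsto_pow_atTop hn).atTop_div_const (by positivity)
  refine (tendsto_id.atTop_mul_atBot₀ hfactor).congr fun s ↦ ?_
  simp only [id_eq]
  ring

theorem integrableExpSet_hyperScorerMeasure (hn : n ≠ 0) :
    integrableExpSet id (hyperScorerMeasure n) = univ := by
  refine eq_univ_of_forall fun t ↦ integrable_hyperScorerMeasure_iff.mpr ?_
  simp only [id_eq, smul_eq_mul, ← Real.exp_add]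
  refine integrable_of_isBigO_exp_neg one_pos (by fun_prop) <|
    Real.isBigO_exp_comp_exp_comp.mpr (Tendsto.isBoundedUnder_le_atBot ?_)
  refine (tendsto_neg_pow_div_add_mul_atBot hn (t + 1)).congr fun s ↦ ?_
  simp only [Pi.sub_apply]
  ring

theorem mem_interior_integrableExpSet_hyperScorerMeasure (hn : n ≠ 0) (t : ℝ) :
    t ∈ interior (integrableExpSet id (hyperScorerMeasure n)) := by
  simp [integrableExpSet_hyperScorerMeasure hn]

theorem integrableOn_pow_mul_cexp (hn : n ≠ 0) (k : ℕ) (z : ℂ) :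
    IntegrableOn (fun s : ℝ ↦ (s : ℂ) ^ k * Complex.exp (-(s : ℂ) ^ (n + 1) / (n + 1) + z * s))
      (Ioi 0) := by
  simp only [← exp_neg_pow_div_smul_cexp]
  exact integrable_hyperScorerMeasure_iff.mp <|
    integrable_pow_mul_cexp_of_re_mem_interior_integrableExpSet
      (mem_interior_integrableExpSet_hyperScorerMeasure hn z.re) k

theorem differentiable_hyperScorer (hn : n ≠ 0) : Differentiable ℂ (hyperScorer n) := by
  rw [← complexMGF_hyperScorerMeasure]
  exact fun z ↦ (hasDerivAt_complexMGF
    (mem_interior_integrableExpSet_hyperScorerMeasure hn z.re)).differentiableAt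

theorem iteratedDeriv_hyperScorer (hn : n ≠ 0) (k : ℕ) (z : ℂ) :
    iteratedDeriv k (hyperScorer n) z =
      ∫ s in Ioi (0 : ℝ), (s : ℂ) ^ k * Complex.exp (-(s : ℂ) ^ (n + 1) / (n + 1) + z * s) := by
  rw [← complexMGF_hyperScorerMeasure,
    iteratedDeriv_complexMGF (mem_interior_integrableExpSet_hyperScorerMeasure hn z.re),
    integral_hyperScorerMeasure]
  simp only [id_eq, exp_neg_pow_div_smul_cexp]

theorem hasDerivAt_cexp_neg_pow_div_add_mul (n : ℕ) (z : ℂ) (s : ℝ) :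
    HasDerivAt (fun s : ℝ ↦ Complex.exp (-(s : ℂ) ^ (n + 1) / (n + 1) + z * s))
      ((z - (s : ℂ) ^ n) * Complex.exp (-(s : ℂ) ^ (n + 1) / (n + 1) + z * s)) s := by
  have hs : HasDerivAt (fun s : ℝ ↦ (s : ℂ)) 1 s := Complex.ofRealCLM.hasDerivAt
  have hn : (n + 1 : ℂ) ≠ 0 := n.cast_add_one_ne_zero
  refine (((hs.fun_pow (n + 1)).fun_neg.div_const (n + 1 : ℂ)).fun_add
    (hs.const_mul z)).cexp.congr_deriv ?_
  push_cast
  field_simp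
  ring

theorem iteratedDeriv_hyperScorer_self (hn : n ≠ 0) (z : ℂ) :
    iteratedDeriv n (hyperScorer n) z = z * hyperScorer n z + 1 := by
  let e : ℝ → ℂ := fun s ↦ Complex.exp (-(s : ℂ) ^ (n + 1) / (n + 1) + z * s)
  have he : IntegrableOn e (Ioi 0) := by simpa using integrableOn_pow_mul_cexp hn 0 z
  have he_pow : IntegrableOn (fun s : ℝ ↦ (s : ℂ) ^ n * e s) (Ioi 0) :=
    integrableOn_pow_mul_cexp hn n z
  have he_deriv : IntegrableOn (fun s : ℝ ↦ (z - (s : ℂ) ^ n) * e s) (Ioi 0) := by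
    simpa only [sub_mul] using! (he.const_mul z).sub he_pow
  have hderiv (s : ℝ) : HasDerivAt e ((z - (s : ℂ) ^ n) * e s) s :=
    hasDerivAt_cexp_neg_pow_div_add_mul n z s
  have hlim := tendsto_zero_of_hasDerivAt_of_integrableOn_Ioi (fun s _ ↦ hderiv s) he_deriv he
  have hboundary : z * hyperScorer n z - iteratedDeriv n (hyperScorer n) z = -1 := calc
    _ = ∫ s in Ioi (0 : ℝ), (z - (s : ℂ) ^ n) * e s := by
      simp only [sub_mul]
      rw [integral_sub (he.const_mul z) he_pow, integral_const_mul,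
        iteratedDeriv_hyperScorer hn, hyperScorer]
    _ = 0 - e 0 := integral_Ioi_of_hasDerivAt_of_tendsto' (fun s _ ↦ hderiv s) he_deriv hlim
    _ = -1 := by simp [e]
  linear_combination -hboundary

end HyperScorer

section HyperAiry

/-- The function `∫ exp(−uⁿ⁺¹/(n+1) + z·u) du`, integrated inwards along the ray `ω·ℝ⁺` and then
outwards along `ℝ⁺`, where `ω` is meant to be an `(n+1)`-st root of unity. -/
noncomputable def hyperAiry (n : ℕ) (ω z : ℂ) : ℂ :=
  hyperScorer n z - ω * hyperScorer n (ω * z)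

variable {n : ℕ} {ω : ℂ}

theorem differentiable_hyperAiry (hn : n ≠ 0) (ω : ℂ) : Differentiable ℂ (hyperAiry n ω) :=
  (differentiable_hyperScorer hn).sub <|
    ((differentiable_hyperScorer hn).comp (differentiable_id.const_mul ω)).const_mul ω

theorem iteratedDeriv_mul_hyperScorer_comp_mul (hn : n ≠ 0) (hω : ω ^ (n + 1) = 1) (z : ℂ) :
    iteratedDeriv n (fun w ↦ ω * hyperScorer n (ω * w)) z =
      z * (ω * hyperScorer n (ω * z)) + 1 := by
  rw [iteratedDeriv_const_mul_field,
    iteratedDeriv_comp_const_mul (differentiable_hyperScorer hn).contDiff]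
  simp only [iteratedDeriv_hyperScorer_self hn]
  linear_combination (ω * z * hyperScorer n (ω * z) + 1) * hω

theorem iteratedDeriv_hyperAiry (hn : n ≠ 0) (hω : ω ^ (n + 1) = 1) (z : ℂ) :
    iteratedDeriv n (hyperAiry n ω) z = z * hyperAiry n ω z := by
  have hsmooth : ContDiff ℂ n (hyperScorer n) := (differentiable_hyperScorer hn).contDiff
  unfold hyperAiry
  rw [iteratedDeriv_fun_sub (by fun_prop) (by fun_prop), iteratedDeriv_hyperScorer_self hn,
    iteratedDeriv_mul_hyperScorer_comp_mul hn hω]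
  ring

end HyperAiry

theorem neg_exp_neg_pi_mul_I_div_three_pow_three :
    (-Complex.exp (-(Real.pi * Complex.I) / 3)) ^ 3 = 1 := by
  rw [neg_pow, ← Complex.exp_nat_mul, Nat.cast_ofNat, mul_div_cancel₀ _ three_ne_zero,
    Complex.exp_neg_pi_mul_I]
  norm_num

theorem Afun_eq_hyperAiry :
    Afun = fun z ↦ (Real.sqrt Real.pi : ℂ)⁻¹ *
      hyperAiry 2 (-Complex.exp (-(Real.pi * Complex.I) / 3)) z := by
  ext z
  have hcast : ((2 : ℕ) : ℂ) + 1 = 3 := by norm_num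
  simp only [Afun, hyperAiry, hyperScorer, hcast, neg_mul, sub_neg_eq_add, ← sub_eq_add_neg,
    Nat.reduceAdd]

/-- The function 𝔄 is entire and solves the Airy equation . -/
theorem Afun_entire_and_airy :
    Differentiable ℂ Afun ∧ ∀ z : ℂ, deriv (deriv Afun) z = z * Afun z := by
  rw [Afun_eq_hyperAiry]
  refine ⟨(differentiable_hyperAiry two_ne_zero _).const_mul _, fun z ↦ ?_⟩
  rw [← iteratedDeriv_one, ← iteratedDeriv_succ', iteratedDeriv_const_mul_field,
    iteratedDeriv_hyperAiry two_ne_zero neg_exp_neg_pi_mul_I_div_three_pow_three]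
  ring
end

section
/- Suppose (α, β) solves the Riccati system on a closed subinterval [u₀, u₂] ⊆ [u₀, u₁] with β(u₀) > 0. Set C := inf_{u ∈ [u₀,u₁]} Re V(u). If g : [u₀, u₂] → ℝ is differentiable with g'(u) = C − g(u)² for all u and g(u₂) = α(u₂), then α(u) ≤ g(u) for all u ∈ [u₀, u₂]. -/
/-!
Put `w = α - g`. Dropping `β² ≥ 0` gives `α' ≥ Re V - α² ≥ C - α²`, and subtracting `g' = C - g²`
gives the linear inequality `w' ≥ -(α + g) w`. Hence the product of `w` with the integrating
factor `exp (∫ (α + g))` is monotone, so `w ≤ 0` propagates backwards from the right endpoint.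
-/

open Set

theorem exists_hasDerivAt_of_continuousOn_Icc {E : Type*} [NormedAddCommGroup E] [NormedSpace ℝ E]
    [CompleteSpace E] {a b : ℝ} (hab : a ≤ b) {f : ℝ → E} (hf : ContinuousOn f (Icc a b)) :
    ∃ F : ℝ → E, ∀ x ∈ Icc a b, HasDerivAt F (f x) x := by
  -- Extending `f` by constants makes the derivative two-sided at the endpoints as well.
  have h_ext : Continuous (IccExtend hab ((Icc a b).domRestrict f)) :=
    hf.domRestrict.Icc_extend'
  refine ⟨fun x => ∫ t in a..x, IccExtend hab ((Icc a b).domRestrict f) t, fun x hx => ?_⟩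
  simpa only [IccExtend_of_mem hab _ hx, domRestrict_apply] using
    (h_ext.integral_hasStrictDerivAt a x).hasDerivAt

theorem monotoneOn_mul_exp_of_deriv_add_mul_nonneg {D : Set ℝ} (hD : Convex ℝ D)
    {w w' f F : ℝ → ℝ} (hw : ContinuousOn w D) (hF : ContinuousOn F D)
    (hw' : ∀ x ∈ interior D, HasDerivAt w (w' x) x)
    (hF' : ∀ x ∈ interior D, HasDerivAt F (f x) x)
    (h_nonneg : ∀ x ∈ interior D, 0 ≤ w' x + f x * w x) :
    MonotoneOn (fun x => w x * Real.exp (F x)) D := by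
  have h_deriv : ∀ x ∈ interior D, HasDerivAt (fun x => w x * Real.exp (F x))
      ((w' x + f x * w x) * Real.exp (F x)) x := fun x hx => by
    have h_mul := (hw' x hx).mul (hF' x hx).exp
    exact h_mul.congr_deriv (by ring)
  exact monotoneOn_of_hasDerivWithinAt_nonneg hD (hw.mul hF.rexp)
    (fun x hx => (h_deriv x hx).hasDerivWithinAt)
    (fun x hx => mul_nonneg (h_nonneg x hx) (Real.exp_pos _).le)

theorem nonpos_of_deriv_add_mul_nonneg {a b : ℝ} {f w w' : ℝ → ℝ}
    (hf : ContinuousOn f (Icc a b)) (hw : ContinuousOn w (Icc a b))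
    (hw' : ∀ x ∈ Ioo a b, HasDerivAt w (w' x) x)
    (h_nonneg : ∀ x ∈ Ioo a b, 0 ≤ w' x + f x * w x) (hb : w b ≤ 0) :
    ∀ x ∈ Icc a b, w x ≤ 0 := by
  intro x hx
  have hab : a ≤ b := hx.1.trans hx.2
  obtain ⟨F, hF⟩ := exists_hasDerivAt_of_continuousOn_Icc hab hf
  have h_mono : MonotoneOn (fun x => w x * Real.exp (F x)) (Icc a b) := by
    rw [← interior_Icc] at hw' h_nonneg
    exact monotoneOn_mul_exp_of_deriv_add_mul_nonneg (convex_Icc a b) hw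
      (HasDerivAt.continuousOn hF) hw' (fun x hx => hF x (interior_subset hx)) h_nonneg
  refine nonpos_of_mul_nonpos_left ?_ (Real.exp_pos (F x))
  calc w x * Real.exp (F x) ≤ w b * Real.exp (F b) := h_mono hx (right_mem_Icc.2 hab) hx.2
    _ ≤ 0 := mul_nonpos_of_nonpos_of_nonneg hb (Real.exp_pos _).le

theorem le_of_deriv_add_sq_le_deriv_add_sq {a b : ℝ} {f f' g g' : ℝ → ℝ}
    (hf : ContinuousOn f (Icc a b)) (hg : ContinuousOn g (Icc a b))
    (hf' : ∀ x ∈ Ioo a b, HasDerivAt f (f' x) x) (hg' : ∀ x ∈ Ioo a b, HasDerivAt g (g' x) x)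
    (hle : ∀ x ∈ Ioo a b, g' x + g x ^ 2 ≤ f' x + f x ^ 2) (hb : f b ≤ g b) :
    ∀ x ∈ Icc a b, f x ≤ g x := by
  have h_linear : ∀ x ∈ Ioo a b, 0 ≤ f' x - g' x + (f x + g x) * (f x - g x) := fun x hx => by
    linear_combination hle x hx
  have h_sub : ∀ x ∈ Icc a b, f x - g x ≤ 0 :=
    nonpos_of_deriv_add_mul_nonneg (hf.add hg) (hf.sub hg)
      (fun x hx => (hf' x hx).sub (hg' x hx)) h_linear (sub_nonpos.2 hb)
  exact fun x hx => sub_nonpos.1 (h_sub x hx)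

theorem riccati_real_part_upper_bound_general {a b C : ℝ} {v α β g : ℝ → ℝ}
    (hα : ∀ u ∈ Icc a b, HasDerivAt α (v u - α u ^ 2 + β u ^ 2) u)
    (hg : ∀ u ∈ Icc a b, HasDerivAt g (C - g u ^ 2) u)
    (hC : ∀ u ∈ Icc a b, C ≤ v u) (hb : α b ≤ g b) :
    ∀ u ∈ Icc a b, α u ≤ g u := by
  have h_sub : Ioo a b ⊆ Icc a b := Ioo_subset_Icc_self
  exact le_of_deriv_add_sq_le_deriv_add_sq (HasDerivAt.continuousOn hα)
    (HasDerivAt.continuousOn hg) (fun u hu => hα u (h_sub hu)) (fun u hu => hg u (h_sub hu))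
    (fun u hu => by linarith [hC u (h_sub hu), sq_nonneg (β u)]) hb

/-- Lemma 2.4: comparison bound for the real part of a Riccati solution.
Let (α, β) solve the Riccati system associated with V on [u₀, u₂] ⊆ [u₀, u₁]
with β(u₀) > 0, where Im V ≥ 0 on [u₀, u₁].  With C := inf of Re V over [u₀, u₁],
if g solves g' = C − g² with g(u₂) = α(u₂), then α ≤ g on [u₀, u₂]. -/
theorem riccati_real_part_upper_bound
    (u₀ u₁ u₂ : ℝ) (h01 : u₀ < u₁) (h02 : u₀ ≤ u₂) (h21 : u₂ ≤ u₁)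
    (V : ℝ → ℂ) (hVc : ContinuousOn V (Set.Icc u₀ u₁))
    (hVim : ∀ u ∈ Set.Icc u₀ u₁, 0 ≤ (V u).im)
    (α β : ℝ → ℝ)
    (hα : ∀ u ∈ Set.Icc u₀ u₂, HasDerivAt α ((V u).re - α u ^ 2 + β u ^ 2) u)
    (hβ : ∀ u ∈ Set.Icc u₀ u₂, HasDerivAt β ((V u).im - 2 * α u * β u) u)
    (hβ0 : 0 < β u₀)
    (C : ℝ) (hC : C = sInf ((fun u => (V u).re) '' Set.Icc u₀ u₁))
    (g : ℝ → ℝ)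
    (hg : ∀ u ∈ Set.Icc u₀ u₂, HasDerivAt g (C - g u ^ 2) u)
    (hg2 : g u₂ = α u₂) :
    ∀ u ∈ Set.Icc u₀ u₂, α u ≤ g u := by
  have hCV : ∀ u ∈ Icc u₀ u₂, C ≤ (V u).re := fun _ hu => hC.trans_le <|
    (Complex.continuous_re.comp_continuousOn hVc).sInf_image_Icc_le (Icc_subset_Icc_right h21 hu)
  exact riccati_real_part_upper_bound_general hα hg hCV hg2.ge
end

section
/- The function 𝔄 has no zeros off the ray e^{-iπ/3}·ℝ⁺: for every z₀ ∈ ℂ with z₀ ∉ {e^{-iπ/3}·r : r > 0}, one has 𝔄(z₀) ≠ 0. -/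
/-!
Put `a = e^{-iπ/3}`, so that `a³ = -1`. In the variable `w = -z/a` the function 𝔄 becomes a
solution of the Airy equation `y'' = w y`, which decays together with `y'` along every horizontal
ray `w + ℝ⁺`. If `y w = 0`, then `y' ȳ` vanishes at both ends of this ray, while its derivative
along the ray is `|y'|² + (w + x) |y|²`. Unless `w < 0`, some multiplier `l` in the closed right
half-plane makes `Re (l (w + x))` positive for all `x > 0`; then `Re (l y' ȳ)` is nondecreasing,
hence identically zero, and `y` vanishes on the ray. So `y` vanishes identically, contradicting
`y 0 ≠ 0`.
-/

open MeasureTheory Set Filter Topology Asymptotics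
open scoped Real ComplexConjugate ComplexOrder

section GreenTransform

lemma eq_of_monotoneOn_Ici_of_tendsto {α β : Type*} [TopologicalSpace β] [PartialOrder β]
    [OrderClosedTopology β] [LinearOrder α] {f : α → β} {a x : α} (hf : MonotoneOn f (Ici a))
    (hlim : Tendsto f atTop (𝓝 (f a))) (hx : a ≤ x) : f x = f a := by
  have : Nonempty α := ⟨a⟩
  refine le_antisymm (ge_of_tendsto hlim ?_) (hf self_mem_Ici hx hx)
  filter_upwards [eventually_ge_atTop x] with t ht using hf hx (hx.trans ht) ht

lemma eq_zero_of_hasDerivAt_nonneg_of_tendsto {f f' : ℝ → ℝ} {a x : ℝ}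
    (hf : ∀ t ∈ Ici a, HasDerivAt f (f' t) t) (hf' : ∀ t ∈ Ioi a, 0 ≤ f' t)
    (hlim : Tendsto f atTop (𝓝 (f a))) (hx : a < x) : f' x = 0 := by
  have hmono : MonotoneOn f (Ici a) :=
    monotoneOn_of_hasDerivWithinAt_nonneg (convex_Ici a)
      (fun t ht => (hf t ht).continuousAt.continuousWithinAt)
      (fun t ht => (hf t (interior_subset ht)).hasDerivWithinAt)
      (fun t ht => hf' t (by simpa using ht))
  have hconst : f =ᶠ[𝓝 x] fun _ => f a := by
    filter_upwards [lt_mem_nhds hx] with t ht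
      using eq_of_monotoneOn_Ici_of_tendsto hmono hlim ht.le
  exact (hf x hx.le).unique ((hasDerivAt_const x (f a)).congr_of_eventuallyEq hconst)

lemma hasDerivAt_re_mul_mul_conj {u v : ℝ → ℂ} {q : ℂ} {x : ℝ} (l : ℂ)
    (hu : HasDerivAt u (v x) x) (hv : HasDerivAt v (q * u x) x) :
    HasDerivAt (fun t => (l * (v t * conj (u t))).re)
      (l.re * ‖v x‖ ^ 2 + (l * q).re * ‖u x‖ ^ 2) x := by
  have h : HasDerivAt (fun t => l * (v t * conj (u t)))
      (l * (q * u x * conj (u x) + v x * conj (v x))) x := (hv.mul hu.star).const_mul l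
  refine (Complex.reCLM.hasFDerivAt.comp_hasDerivAt x h).congr_deriv ?_
  have hsplit : l * (q * u x * conj (u x) + v x * conj (v x)) =
      l * (‖v x‖ ^ 2 : ℝ) + l * q * (‖u x‖ ^ 2 : ℝ) := by
    push_cast
    rw [← Complex.mul_conj', ← Complex.mul_conj']
    ring
  rw [Complex.reCLM_apply, hsplit, Complex.add_re, Complex.re_mul_ofReal, Complex.re_mul_ofReal]

lemma eq_zero_of_hasDerivAt_of_re_mul_pos {u v q : ℝ → ℂ} {l : ℂ} {a x : ℝ}
    (hu : ∀ t ∈ Ici a, HasDerivAt u (v t) t) (hv : ∀ t ∈ Ici a, HasDerivAt v (q t * u t) t)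
    (hl : 0 ≤ l.re) (hq : ∀ t ∈ Ioi a, 0 < (l * q t).re) (ha : v a * conj (u a) = 0)
    (hlim : Tendsto (fun t => v t * conj (u t)) atTop (𝓝 0)) (hx : a < x) : u x = 0 := by
  have hlim_re : Tendsto (fun t => (l * (v t * conj (u t))).re) atTop
      (𝓝 (l * (v a * conj (u a))).re) := by
    rw [ha]
    exact (Complex.continuous_re.tendsto _).comp (hlim.const_mul l)
  have hv_nonneg (t : ℝ) : 0 ≤ l.re * ‖v t‖ ^ 2 := by positivity
  have hu_nonneg (t : ℝ) (ht : t ∈ Ioi a) : 0 ≤ (l * q t).re * ‖u t‖ ^ 2 :=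
    mul_nonneg (hq t ht).le (sq_nonneg _)
  have hsum : l.re * ‖v x‖ ^ 2 + (l * q x).re * ‖u x‖ ^ 2 = 0 :=
    eq_zero_of_hasDerivAt_nonneg_of_tendsto
      (f' := fun t => l.re * ‖v t‖ ^ 2 + (l * q t).re * ‖u t‖ ^ 2)
      (fun t ht => hasDerivAt_re_mul_mul_conj l (hu t ht) (hv t ht))
      (fun t ht => add_nonneg (hv_nonneg t) (hu_nonneg t ht)) hlim_re hx
  have hux : (l * q x).re * ‖u x‖ ^ 2 = 0 := by linarith [hv_nonneg x, hu_nonneg x hx]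
  simpa only [mul_eq_zero, (hq x hx).ne', false_or, sq_eq_zero_iff, norm_eq_zero] using hux

end GreenTransform

lemma exists_re_mul_add_ofReal_pos {w : ℂ} (hw : ¬ w < 0) :
    ∃ l : ℂ, 0 ≤ l.re ∧ ∀ x : ℝ, 0 < x → 0 < (l * (w + x)).re := by
  rcases Complex.not_lt_zero_iff.mp hw with hre | him
  · exact ⟨1, zero_le_one, fun x hx => by simpa using add_pos_of_nonneg_of_pos hre hx⟩
  · refine ⟨-(w.im * Complex.I), by simp, fun x _ => ?_⟩
    have hval : (-(w.im * Complex.I) * (w + x)).re = w.im ^ 2 := by simp [sq]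
    rw [hval]
    positivity

lemma eq_zero_of_forall_pos_add_ofReal_eq_zero {f : ℂ → ℂ} (hf : Differentiable ℂ f) {w : ℂ}
    (hw : ∀ x : ℝ, 0 < x → f (w + x) = 0) : f = 0 := by
  have hline : Tendsto (fun x : ℝ => w + (x : ℂ)) (𝓝[>] 0) (𝓝[≠] w) := by
    have h := (Complex.ofRealCLM.hasDerivAt.const_add w).tendsto_nhdsNE
      (x := (0 : ℝ)) (by simp)
    simpa using h.mono_left (nhdsGT_le_nhdsNE 0)
  refine AnalyticOnNhd.eq_of_frequently_eq (z₀ := w) (fun z _ => hf.analyticAt z)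
    analyticOnNhd_const (hline.frequently (Eventually.frequently ?_))
  filter_upwards [self_mem_nhdsWithin] with x hx using hw x hx

lemma tendsto_mul_add_ofReal_comap_re_atTop {b : ℂ} (hb : 0 < b.re) (w : ℂ) :
    Tendsto (fun x : ℝ => b * (w + x)) atTop (comap Complex.re atTop) := by
  have hre (x : ℝ) : (b * (w + x)).re = (b * w).re + b.re * x := by
    rw [mul_add, Complex.add_re, Complex.re_mul_ofReal]
  simp only [tendsto_comap_iff, Function.comp_def, hre]
  exact tendsto_atTop_add_const_left _ _ (tendsto_id.const_mul_atTop hb)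

lemma inv_re_pos {a : ℂ} (ha : 0 < a.re) : 0 < a⁻¹.re := by
  have hne : a ≠ 0 := by rintro rfl; simp at ha
  rw [Complex.inv_re]
  exact div_pos ha (Complex.normSq_pos.mpr hne)

section AiryMoment

/-- The integrand `sᵏ exp(-s³/3 - c s)` of `airyMoment`. -/
noncomputable def airyKernel (k : ℕ) (c : ℂ) (s : ℝ) : ℂ :=
  (s : ℂ) ^ k * Complex.exp (-(s : ℂ) ^ 3 / 3 - c * s)

/-- The half-line moments `∫₀^∞ sᵏ exp(-s³/3 - c s) ds`: up to sign, the `k`-th derivative in `c`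
of the contribution of one ray of the contour to an Airy-type integral. -/
noncomputable def airyMoment (k : ℕ) (c : ℂ) : ℂ :=
  ∫ s in Ioi (0 : ℝ), airyKernel k c s

lemma norm_airyKernel {s : ℝ} (hs : 0 ≤ s) (k : ℕ) (c : ℂ) :
    ‖airyKernel k c s‖ = s ^ k * Real.exp (-s ^ 3 / 3 - c.re * s) := by
  have h : -(s : ℂ) ^ 3 / 3 - c * s = ((-s ^ 3 / 3 : ℝ) : ℂ) - c * s := by push_cast; rfl
  rw [airyKernel, norm_mul, norm_pow, Complex.norm_real, Real.norm_of_nonneg hs,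
    Complex.norm_exp, h, Complex.sub_re, Complex.ofReal_re, Complex.re_mul_ofReal]

lemma continuous_airyKernel (k : ℕ) (c : ℂ) : Continuous (airyKernel k c) := by
  unfold airyKernel
  fun_prop

lemma norm_airyKernel_le_of_re_le {c d : ℂ} (hcd : c.re ≤ d.re) (k : ℕ) {s : ℝ} (hs : 0 ≤ s) :
    ‖airyKernel k d s‖ ≤ ‖airyKernel k c s‖ := by
  rw [norm_airyKernel hs, norm_airyKernel hs]
  gcongr

lemma norm_airyKernel_le_pow_mul_exp (k : ℕ) (c : ℂ) {s : ℝ} (hs : 0 ≤ s) :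
    ‖airyKernel k c s‖ ≤ s ^ k * Real.exp (-(c.re * s)) := by
  rw [norm_airyKernel hs]
  gcongr
  linarith [pow_nonneg hs 3]

lemma airyKernel_isBigO_exp_neg (k : ℕ) (c : ℂ) :
    airyKernel k c =O[atTop] fun s => Real.exp (-s) := by
  refine IsBigO.of_bound' ?_
  have hpow := (Real.isLittleO_pow_exp_atTop (n := k)).bound one_pos
  filter_upwards [hpow, eventually_ge_atTop 1, eventually_ge_atTop (3 * (2 - c.re))]
    with s hpow h1 hc
  have hs : 0 ≤ s := zero_le_one.trans h1
  rw [one_mul, Real.norm_of_nonneg (by positivity), Real.norm_of_nonneg (by positivity)] at hpow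
  have hcubic : -s ^ 3 / 3 - c.re * s ≤ -(2 * s) := by
    have hsq : 3 * (2 - c.re) ≤ s ^ 2 := by nlinarith
    linarith [mul_le_mul_of_nonneg_right hsq hs]
  calc ‖airyKernel k c s‖ = s ^ k * Real.exp (-s ^ 3 / 3 - c.re * s) := norm_airyKernel hs k c
    _ ≤ Real.exp s * Real.exp (-(2 * s)) := by gcongr
    _ = Real.exp (-s) := by rw [← Real.exp_add]; ring_nf
    _ ≤ ‖Real.exp (-s)‖ := le_abs_self _

lemma integrableOn_airyKernel (k : ℕ) (c : ℂ) : IntegrableOn (airyKernel k c) (Ioi 0) :=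
  ((continuous_airyKernel k c).locallyIntegrable.locallyIntegrableOn
    (Ici 0)).integrableOn_of_isBigO_atTop (airyKernel_isBigO_exp_neg k c)
      ⟨Ioi 0, Ioi_mem_atTop 0, integrableOn_exp_neg_Ioi 0⟩ |>.mono_set Ioi_subset_Ici_self

lemma tendsto_airyKernel_atTop (k : ℕ) (c : ℂ) : Tendsto (airyKernel k c) atTop (𝓝 0) :=
  (airyKernel_isBigO_exp_neg k c).trans_tendsto Real.tendsto_exp_neg_atTop_nhds_zero

lemma hasDerivAt_airyKernel_left (k : ℕ) (c : ℂ) (s : ℝ) :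
    HasDerivAt (fun c => airyKernel k c s) (-airyKernel (k + 1) c s) c := by
  have hphase : HasDerivAt (fun c : ℂ => -(s : ℂ) ^ 3 / 3 - c * s) (-(1 * (s : ℂ))) c :=
    ((hasDerivAt_id c).mul_const (s : ℂ)).const_sub _
  refine (hphase.cexp.const_mul ((s : ℂ) ^ k)).congr_deriv ?_
  unfold airyKernel
  ring

lemma hasDerivAt_airyKernel_zero (c : ℂ) (s : ℝ) :
    HasDerivAt (airyKernel 0 c) (-(airyKernel 2 c s + c * airyKernel 0 c s)) s := by
  have hs : HasDerivAt (fun s : ℝ => (s : ℂ)) 1 s := Complex.ofRealCLM.hasDerivAt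
  have h := (((hs.fun_pow 3).neg.div_const 3).sub (hs.const_mul c)).cexp.const_mul ((s : ℂ) ^ 0)
  refine h.congr_deriv ?_
  simp only [airyKernel, Pi.sub_apply, Pi.neg_apply]
  push_cast
  ring

lemma hasDerivAt_airyMoment (k : ℕ) (c : ℂ) :
    HasDerivAt (airyMoment k) (-airyMoment (k + 1) c) c := by
  have hbound : ∀ᵐ s ∂volume.restrict (Ioi (0 : ℝ)), ∀ d ∈ Metric.ball c 1,
      ‖-airyKernel (k + 1) d s‖ ≤ ‖airyKernel (k + 1) (c - 1) s‖ := by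
    filter_upwards [ae_restrict_mem measurableSet_Ioi] with s hs d hd
    rw [norm_neg]
    refine norm_airyKernel_le_of_re_le ?_ _ (le_of_lt hs)
    have hre : |(d - c).re| < 1 := (Complex.abs_re_le_norm _).trans_lt (mem_ball_iff_norm.mp hd)
    rw [Complex.sub_re] at hre
    rw [Complex.sub_re, Complex.one_re]
    linarith [(abs_lt.mp hre).1]
  have h := (hasDerivAt_integral_of_dominated_loc_of_deriv_le (Metric.ball_mem_nhds c one_pos)
    (Eventually.of_forall fun d => (continuous_airyKernel k d).aestronglyMeasurable)
    (integrableOn_airyKernel k c) (continuous_airyKernel (k + 1) c).neg.aestronglyMeasurable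
    hbound (integrableOn_airyKernel (k + 1) (c - 1)).norm
    (Eventually.of_forall fun s d _ => hasDerivAt_airyKernel_left k d s)).2
  rwa [integral_neg] at h

lemma hasDerivAt_airyMoment_const_mul (k : ℕ) (b w : ℂ) :
    HasDerivAt (fun w => airyMoment k (b * w)) (-(b * airyMoment (k + 1) (b * w))) w := by
  refine ((hasDerivAt_airyMoment k (b * w)).comp w ((hasDerivAt_id w).const_mul b)).congr_deriv ?_
  ring

lemma airyMoment_two (c : ℂ) : airyMoment 2 c = 1 - c * airyMoment 0 c := by
  have hint : IntegrableOn (fun s => c * airyKernel 0 c s) (Ioi 0) :=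
    (integrableOn_airyKernel 0 c).const_mul c
  have h := integral_Ioi_of_hasDerivAt_of_tendsto'
    (fun s _ => hasDerivAt_airyKernel_zero c s)
    ((integrableOn_airyKernel 2 c).add hint).neg (tendsto_airyKernel_atTop 0 c)
  rw [integral_neg, integral_add (integrableOn_airyKernel 2 c) hint, integral_const_mul,
    show airyKernel 0 c 0 = 1 by simp [airyKernel]] at h
  unfold airyMoment
  linear_combination -h

lemma airyMoment_zero_ofReal_ne_zero (c : ℝ) : airyMoment 0 c ≠ 0 := by
  have hkernel (s : ℝ) : airyKernel 0 c s = (Real.exp (-s ^ 3 / 3 - c * s) : ℝ) := by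
    simp [airyKernel]
  have hint : IntegrableOn (fun s : ℝ => Real.exp (-s ^ 3 / 3 - c * s)) (Ioi 0) := by
    simpa only [IntegrableOn, hkernel, Complex.ofReal_re, RCLike.re_to_complex]
      using (integrableOn_airyKernel 0 c).re
  have : NeZero (volume.restrict (Ioi (0 : ℝ))) := ⟨by simp⟩
  simp_rw [airyMoment, hkernel, integral_complex_ofReal]
  exact Complex.ofReal_ne_zero.mpr (integral_exp_pos hint).ne'

lemma norm_airyMoment_le (k : ℕ) {c : ℂ} (hc : 0 < c.re) :
    ‖airyMoment k c‖ ≤ k.factorial / c.re ^ (k + 1) := by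
  have hpow (s : ℝ) : s ^ ((k + 1 : ℝ) - 1) = s ^ k := by simp
  have hint : IntegrableOn (fun s => s ^ k * Real.exp (-(c.re * s))) (Ioi 0) := by
    simpa using integrableOn_rpow_mul_exp_neg_mul_rpow (s := k)
      (neg_one_lt_zero.trans_le k.cast_nonneg) one_pos hc
  calc ‖airyMoment k c‖ ≤ ∫ s in Ioi (0 : ℝ), s ^ k * Real.exp (-(c.re * s)) := by
        refine norm_integral_le_of_norm_le hint ?_
        filter_upwards [ae_restrict_mem measurableSet_Ioi] with s hs
          using norm_airyKernel_le_pow_mul_exp k c (le_of_lt hs)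
    _ = k.factorial / c.re ^ (k + 1) := by
        have h := Real.integral_rpow_mul_exp_neg_mul_Ioi k.cast_add_one_pos hc
        simp_rw [hpow] at h
        rw [h, Real.Gamma_nat_eq_factorial, ← Nat.cast_add_one, Real.rpow_natCast, one_div, inv_pow,
          inv_mul_eq_div]

lemma tendsto_airyMoment_comap_re_atTop (k : ℕ) :
    Tendsto (airyMoment k) (comap Complex.re atTop) (𝓝 0) := by
  have hlim : Tendsto (fun c : ℂ => k.factorial / c.re ^ (k + 1)) (comap Complex.re atTop) (𝓝 0) :=
    ((tendsto_pow_atTop k.succ_ne_zero).comp tendsto_comap).const_div_atTop _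
  refine squeeze_zero_norm' ?_ hlim
  filter_upwards [tendsto_comap.eventually_gt_atTop 0] with c hc using norm_airyMoment_le k hc

lemma tendsto_airyMoment_mul_add_ofReal (k : ℕ) {b : ℂ} (hb : 0 < b.re) (w : ℂ) :
    Tendsto (fun x : ℝ => airyMoment k (b * (w + x))) atTop (𝓝 0) :=
  (tendsto_airyMoment_comap_re_atTop k).comp (tendsto_mul_add_ofReal_comap_re_atTop hb w)

end AiryMoment

section AirySolution

/-- For `a³ = -1` and `0 < Re a`, the solution of the Airy equation `y'' = w y` that decays as
`w → +∞`; it is a constant multiple of the classical Airy function. For `a = e^{-iπ/3}` it is 𝔄 in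
the rotated variable `w = -z/a`, up to the factor `π^{-1/2}`. -/
noncomputable def airySolution (a w : ℂ) : ℂ :=
  airyMoment 0 (a * w) + a * airyMoment 0 (a⁻¹ * w)

/-- The derivative of `airySolution a`, for `a ≠ 0`. -/
noncomputable def airySolutionDeriv (a w : ℂ) : ℂ :=
  -(a * airyMoment 1 (a * w) + airyMoment 1 (a⁻¹ * w))

variable {a : ℂ}

lemma hasDerivAt_airySolution (ha : a ≠ 0) (w : ℂ) :
    HasDerivAt (airySolution a) (airySolutionDeriv a w) w := by
  refine ((hasDerivAt_airyMoment_const_mul 0 a w).add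
    ((hasDerivAt_airyMoment_const_mul 0 a⁻¹ w).const_mul a)).congr_deriv ?_
  rw [airySolutionDeriv, zero_add]
  field_simp
  ring

lemma hasDerivAt_airySolutionDeriv (ha : a ^ 3 = -1) (w : ℂ) :
    HasDerivAt (airySolutionDeriv a) (w * airySolution a w) w := by
  have hinv : a⁻¹ = -a ^ 2 := inv_eq_of_mul_eq_one_right (by linear_combination -ha)
  refine (((hasDerivAt_airyMoment_const_mul 1 a w).const_mul a).add
    (hasDerivAt_airyMoment_const_mul 1 a⁻¹ w)).neg.congr_deriv ?_
  rw [airySolution, one_add_one_eq_two, airyMoment_two, airyMoment_two, hinv]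
  linear_combination (-w * airyMoment 0 (a * w) - a * w * airyMoment 0 (-a ^ 2 * w)) * ha

lemma differentiable_airySolution (ha : a ≠ 0) : Differentiable ℂ (airySolution a) :=
  fun w => (hasDerivAt_airySolution ha w).differentiableAt

lemma airySolution_zero_ne_zero (ha : a ≠ -1) : airySolution a 0 ≠ 0 := by
  have hfactor : airySolution a 0 = (1 + a) * airyMoment 0 (0 : ℝ) := by
    simp only [airySolution, mul_zero, Complex.ofReal_zero]
    ring
  rw [hfactor]
  exact mul_ne_zero (fun h => ha (eq_neg_of_add_eq_zero_right h))
    (airyMoment_zero_ofReal_ne_zero 0)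

lemma tendsto_airySolution (ha : 0 < a.re) (w : ℂ) :
    Tendsto (fun x : ℝ => airySolution a (w + x)) atTop (𝓝 0) := by
  simpa [airySolution] using (tendsto_airyMoment_mul_add_ofReal 0 ha w).add
    ((tendsto_airyMoment_mul_add_ofReal 0 (inv_re_pos ha) w).const_mul a)

lemma tendsto_airySolutionDeriv (ha : 0 < a.re) (w : ℂ) :
    Tendsto (fun x : ℝ => airySolutionDeriv a (w + x)) atTop (𝓝 0) := by
  simpa [airySolutionDeriv] using (((tendsto_airyMoment_mul_add_ofReal 1 ha w).const_mul a).add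
    (tendsto_airyMoment_mul_add_ofReal 1 (inv_re_pos ha) w)).neg

lemma airySolution_ne_zero (ha : a ^ 3 = -1) (hre : 0 < a.re) {w : ℂ} (hw : ¬ w < 0) :
    airySolution a w ≠ 0 := by
  intro hzero
  have ha0 : a ≠ 0 := by rintro rfl; simp at hre
  have ha1 : a ≠ -1 := by rintro rfl; norm_num at hre
  obtain ⟨l, hl, hlw⟩ := exists_re_mul_add_ofReal_pos hw
  have hu (x : ℝ) : HasDerivAt (fun x : ℝ => airySolution a (w + x))
      (airySolutionDeriv a (w + x)) x :=
    ((hasDerivAt_airySolution ha0 (w + x)).comp_const_add w x).comp_ofReal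
  have hv (x : ℝ) : HasDerivAt (fun x : ℝ => airySolutionDeriv a (w + x))
      ((w + x) * airySolution a (w + x)) x :=
    ((hasDerivAt_airySolutionDeriv ha (w + x)).comp_const_add w x).comp_ofReal
  have hlim : Tendsto (fun x : ℝ => airySolutionDeriv a (w + x) * conj (airySolution a (w + x)))
      atTop (𝓝 0) := by
    simpa using (tendsto_airySolutionDeriv hre w).mul (tendsto_airySolution hre w).star
  have hray (x : ℝ) (hx : 0 < x) : airySolution a (w + x) = 0 :=
    eq_zero_of_hasDerivAt_of_re_mul_pos (u := fun x : ℝ => airySolution a (w + x))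
      (v := fun x : ℝ => airySolutionDeriv a (w + x)) (fun t _ => hu t) (fun t _ => hv t) hl hlw
      (by simp [hzero]) hlim hx
  have hall := eq_zero_of_forall_pos_add_ofReal_eq_zero (differentiable_airySolution ha0) hray
  exact airySolution_zero_ne_zero ha1 (congrFun hall 0)

end AirySolution

lemma exp_neg_pi_mul_I_div_three_pow_three :
    Complex.exp (-(π * Complex.I) / 3) ^ 3 = -1 := by
  rw [← Complex.exp_nat_mul, Nat.cast_ofNat, mul_div_cancel₀ _ three_ne_zero, Complex.exp_neg,
    Complex.exp_pi_mul_I, inv_neg_one]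

lemma exp_neg_pi_mul_I_div_three_re : (Complex.exp (-(π * Complex.I) / 3)).re = 1 / 2 := by
  have h : -(π * Complex.I) / 3 = ((-(π / 3) : ℝ) : ℂ) * Complex.I := by push_cast; ring
  rw [h, Complex.exp_ofReal_mul_I_re, Real.cos_neg, Real.cos_pi_div_three]

lemma Afun_eq_airySolution (z : ℂ) :
    Afun z = (√π : ℂ)⁻¹ * airySolution (Complex.exp (-(π * Complex.I) / 3))
      (-z / Complex.exp (-(π * Complex.I) / 3)) := by
  have hcube := exp_neg_pi_mul_I_div_three_pow_three
  simp only [Afun]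
  set a := Complex.exp (-(π * Complex.I) / 3)
  have ha : a ≠ 0 := Complex.exp_ne_zero _
  have hinv : a⁻¹ * (-z / a) = a * z := by
    field_simp
    linear_combination -z * hcube
  simp only [airySolution, airyMoment, airyKernel, mul_div_cancel₀ _ ha, hinv, pow_zero, one_mul,
    neg_mul, sub_neg_eq_add]

/-- Proposition 2.7: the function 𝔄 has no zeros off the ray . -/
theorem Afun_ne_zero (z₀ : ℂ)
    (hz₀ : ∀ r : ℝ, 0 < r → z₀ ≠ Complex.exp (-(Real.pi * Complex.I)/3) * r) :
    Afun z₀ ≠ 0 := by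
  have hw : ¬ -z₀ / Complex.exp (-(π * Complex.I) / 3) < 0 := by
    intro hneg
    obtain ⟨r, hr, (hzr : (r : ℂ) = _)⟩ := RCLike.neg_iff_exists_ofReal.mp hneg
    refine hz₀ (-r) (neg_pos.mpr hr) ?_
    rw [Complex.ofReal_neg, hzr, mul_neg, mul_div_cancel₀ _ (Complex.exp_ne_zero _), neg_neg]
  have hpi : (√π : ℂ) ≠ 0 := Complex.ofReal_ne_zero.mpr (Real.sqrt_pos.mpr Real.pi_pos).ne'
  have hre : 0 < (Complex.exp (-(π * Complex.I) / 3)).re := by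
    rw [exp_neg_pi_mul_I_div_three_re]
    exact one_half_pos
  rw [Afun_eq_airySolution]
  exact mul_ne_zero (inv_ne_zero hpi)
    (airySolution_ne_zero exp_neg_pi_mul_I_div_three_pow_three hre hw)
end

section
/- For every a ∈ ℂ and each choice of sign ±, the function z ↦ U_a^±(z) is complex differentiable on all of ℂ (entire) and satisfies the Weber equation (U_a^±)''(z) = (z²/4 + a)·U_a^±(z) for all z ∈ ℂ. -/
/-- The parabolic cylinder function U_a^± : the contour integral
exp(−z²/4)·∫_{ℝ ± i} exp(z·t − t²/2)·t^{a−1/2} dt along the horizontal line ℝ + σ·i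
(σ = 1 for U_a^+ and σ = −1 for U_a^−), the power taken with the principal branch
of the logarithm. -/
noncomputable def Upc (σ : ℝ) (a z : ℂ) : ℂ :=
  Complex.exp (-z^2/4) *
    ∫ t : ℝ, Complex.exp (z * (t + σ * Complex.I) - (t + σ * Complex.I)^2/2) *
      Complex.exp ((a - 1/2) * Complex.log (t + σ * Complex.I))

/-!
With `s = t + σi` and `b = a - 1/2`, write `U_a(z) = exp(-z²/4) F_b(z)`, where
`F_b(z) = ∫ exp(zs) exp(-s²/2) s^b dt`. The Gaussian dominates the exponential and the power, so
`F_b` may be differentiated under the integral sign, which gives `F_b' = F_{b+1}`. Integrating the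
`t`-derivative of the integrand of `F_{b+1}` over the line gives
`F_{b+2} = z F_{b+1} + (b + 1) F_b`, that is, `F_b'' = z F_b' + (a + 1/2) F_b`. Conjugation by
`exp(-z²/4)` removes the first-order term and leaves Weber's equation.
-/

open MeasureTheory Complex

theorem norm_cexp_mul_le (z w : ℂ) : ‖cexp (z * w)‖ ≤ Real.exp (‖z‖ * ‖w‖) :=
  (norm_exp_le_exp_norm _).trans_eq (by rw [norm_mul])

section ExponentialFamily

variable {α E : Type*} [MeasurableSpace α] {μ : Measure α} [NormedAddCommGroup E]
  [NormedSpace ℂ E] {f : α → ℂ} {g : α → E}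

theorem aestronglyMeasurable_cexp_mul_smul (hf : AEStronglyMeasurable f μ)
    (hg : AEStronglyMeasurable g μ) (z : ℂ) :
    AEStronglyMeasurable (fun x ↦ cexp (z * f x) • g x) μ :=
  (continuous_exp.comp_aestronglyMeasurable (hf.const_mul z)).smul hg

theorem integrable_cexp_mul_smul (hf : AEStronglyMeasurable f μ) (hg : AEStronglyMeasurable g μ)
    (hfg : ∀ r : ℝ, Integrable (fun x ↦ Real.exp (r * ‖f x‖) * ‖g x‖) μ) (z : ℂ) :
    Integrable (fun x ↦ cexp (z * f x) • g x) μ := by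
  refine (hfg ‖z‖).mono' (aestronglyMeasurable_cexp_mul_smul hf hg z) (.of_forall fun x ↦ ?_)
  rw [norm_smul]
  gcongr
  exact norm_cexp_mul_le z (f x)

theorem hasDerivAt_integral_cexp_mul_smul (hf : AEStronglyMeasurable f μ)
    (hg : AEStronglyMeasurable g μ)
    (hfg : ∀ r : ℝ, Integrable (fun x ↦ Real.exp (r * ‖f x‖) * ‖g x‖) μ) (z : ℂ) :
    HasDerivAt (fun w ↦ ∫ x, cexp (w * f x) • g x ∂μ) (∫ x, cexp (z * f x) • f x • g x ∂μ) z := by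
  have bound (w : ℂ) (hw : w ∈ Metric.ball z 1) (x : α) :
      ‖cexp (w * f x) • f x • g x‖ ≤ Real.exp ((‖z‖ + 2) * ‖f x‖) * ‖g x‖ := by
    have hwz : ‖w‖ ≤ ‖z‖ + 1 := by
      linarith [norm_le_norm_add_norm_sub' w z, mem_ball_iff_norm.1 hw]
    have hfx : ‖f x‖ ≤ Real.exp ‖f x‖ := by linarith [Real.add_one_le_exp ‖f x‖]
    calc ‖cexp (w * f x) • f x • g x‖ = ‖cexp (w * f x)‖ * ‖f x‖ * ‖g x‖ := by
          rw [norm_smul, norm_smul, mul_assoc]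
      _ ≤ Real.exp ((‖z‖ + 1) * ‖f x‖) * Real.exp ‖f x‖ * ‖g x‖ := by
          gcongr
          exact (norm_cexp_mul_le w (f x)).trans (by gcongr)
      _ = Real.exp ((‖z‖ + 2) * ‖f x‖) * ‖g x‖ := by
          rw [← Real.exp_add]
          ring_nf
  have deriv_integrand (w : ℂ) (x : α) :
      HasDerivAt (fun w ↦ cexp (w * f x) • g x) (cexp (w * f x) • f x • g x) w := by
    simpa [smul_smul] using ((hasDerivAt_mul_const (f x)).cexp).smul_const (g x)
  exact (hasDerivAt_integral_of_dominated_loc_of_deriv_le (Metric.ball_mem_nhds z one_pos)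
    (.of_forall (aestronglyMeasurable_cexp_mul_smul hf hg))
    (integrable_cexp_mul_smul hf hg hfg z)
    (aestronglyMeasurable_cexp_mul_smul hf (hf.smul hg) z)
    (.of_forall fun x w hw ↦ bound w hw x) (hfg (‖z‖ + 2))
    (.of_forall fun x w _ ↦ deriv_integrand w x)).2

end ExponentialFamily

theorem hasDerivAt_cexp_neg_sq_div_four (z : ℂ) :
    HasDerivAt (fun w : ℂ ↦ cexp (-w ^ 2 / 4)) (cexp (-z ^ 2 / 4) * (-z / 2)) z :=
  ((hasDerivAt_pow 2 z).fun_neg.div_const 4).cexp.congr_deriv (by push_cast; ring)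

theorem deriv_deriv_cexp_neg_sq_div_four_mul {F F' F'' : ℂ → ℂ}
    (hF : ∀ z, HasDerivAt F (F' z) z) (hF' : ∀ z, HasDerivAt F' (F'' z) z) (z : ℂ) :
    deriv (deriv fun w ↦ cexp (-w ^ 2 / 4) * F w) z =
      cexp (-z ^ 2 / 4) * (F'' z - z * F' z + (z ^ 2 / 4 - 1 / 2) * F z) := by
  have first_deriv : deriv (fun w ↦ cexp (-w ^ 2 / 4) * F w) =
      fun w ↦ cexp (-w ^ 2 / 4) * (F' w - w / 2 * F w) := by
    funext w
    rw [((hasDerivAt_cexp_neg_sq_div_four w).fun_mul (hF w)).deriv]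
    ring
  have hasDerivAt_first_deriv := (hasDerivAt_cexp_neg_sq_div_four z).fun_mul
    ((hF' z).fun_sub (((hasDerivAt_id' z).div_const 2).fun_mul (hF z)))
  rw [first_deriv, hasDerivAt_first_deriv.deriv]
  ring

theorem abs_log_le_abs_log_add_self {c x : ℝ} (hc : 0 < c) (hcx : c ≤ x) :
    |Real.log x| ≤ |Real.log c| + x := by
  rw [abs_le]
  constructor
  · linarith [neg_abs_le (Real.log c), Real.log_le_log hc hcx]
  · linarith [abs_nonneg (Real.log c), Real.log_le_self (hc.trans_le hcx).le]

theorem norm_cpow_le_exp_of_le_norm {c : ℝ} (hc : 0 < c) {s : ℂ} (hs : c ≤ ‖s‖) (b : ℂ) :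
    ‖s ^ b‖ ≤ Real.exp ((|Real.log c| + ‖s‖ + Real.pi) * ‖b‖) := by
  have hs₀ : s ≠ 0 := norm_pos_iff.1 (hc.trans_le hs)
  have norm_log_le : ‖log s‖ ≤ |Real.log c| + ‖s‖ + Real.pi :=
    calc ‖log s‖ ≤ |Real.log ‖s‖| + |s.arg| := by
          simpa only [log_re, log_im] using norm_le_abs_re_add_abs_im (log s)
      _ ≤ |Real.log c| + ‖s‖ + Real.pi :=
          add_le_add (abs_log_le_abs_log_add_self hc hs) (abs_arg_le_pi s)
  rw [cpow_def_of_ne_zero hs₀]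
  exact (norm_cexp_mul_le _ _).trans (by gcongr)

theorem integrable_exp_mul_abs_sub_sq_div_two (c : ℝ) :
    Integrable fun t : ℝ ↦ Real.exp (c * |t| - t ^ 2 / 2) := by
  have gaussian : Integrable fun t : ℝ ↦ Real.exp (c ^ 2) * Real.exp (-(1 / 4) * t ^ 2) :=
    (integrable_exp_neg_mul_sq (by norm_num)).const_mul _
  refine gaussian.mono' (by fun_prop) (.of_forall fun t ↦ ?_)
  rw [Real.norm_eq_abs, Real.abs_exp, ← Real.exp_add]
  gcongr
  linarith [two_mul_le_add_sq c (|t| / 2), div_pow |t| 2 2, sq_abs t]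

/-- The weight `exp(-s²/2) s^b` (principal branch) of the contour integrals below. -/
noncomputable def gaussianCpow (b s : ℂ) : ℂ :=
  cexp (-s ^ 2 / 2) * s ^ b

theorem gaussianCpow_add_one (b : ℂ) {s : ℂ} (hs : s ≠ 0) :
    gaussianCpow (b + 1) s = s * gaussianCpow b s := by
  rw [gaussianCpow, gaussianCpow, cpow_add _ _ hs, cpow_one]
  ring

theorem hasDerivAt_gaussianCpow_add_one (b : ℂ) {s : ℂ} (hs : s ∈ slitPlane) :
    HasDerivAt (gaussianCpow (b + 1))
      ((b + 1) * gaussianCpow b s - gaussianCpow (b + 1 + 1) s) s := by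
  have gaussian : HasDerivAt (fun w : ℂ ↦ cexp (-w ^ 2 / 2)) (cexp (-s ^ 2 / 2) * -s) s :=
    ((hasDerivAt_pow 2 s).fun_neg.div_const 2).cexp.congr_deriv (by push_cast; ring)
  refine (gaussian.fun_mul ((hasDerivAt_id' s).cpow_const hs)).congr_deriv ?_
  rw [gaussianCpow_add_one (b + 1) (slitPlane_ne_zero hs), add_sub_cancel_right]
  simp only [gaussianCpow]
  ring

/-- The integrand `exp(zs) exp(-s²/2) s^b` of `hermiteIntegral`, as a function of `s`. -/
noncomputable def hermiteIntegrand (b z s : ℂ) : ℂ :=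
  cexp (z * s) * gaussianCpow b s

theorem hasDerivAt_hermiteIntegrand_add_one (b z : ℂ) {s : ℂ} (hs : s ∈ slitPlane) :
    HasDerivAt (hermiteIntegrand (b + 1) z)
      (z * hermiteIntegrand (b + 1) z s + (b + 1) * hermiteIntegrand b z s -
        hermiteIntegrand (b + 1 + 1) z s) s := by
  refine ((hasDerivAt_const_mul z).cexp.fun_mul
    (hasDerivAt_gaussianCpow_add_one b hs)).congr_deriv ?_
  simp only [hermiteIntegrand]
  ring

section HorizontalLine

variable {σ : ℝ}

theorem ofReal_add_mul_I_mem_slitPlane (hσ : σ ≠ 0) (t : ℝ) : (t + σ * I : ℂ) ∈ slitPlane :=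
  .inr (by simpa using hσ)

theorem continuous_gaussianCpow_line (hσ : σ ≠ 0) (b : ℂ) :
    Continuous fun t : ℝ ↦ gaussianCpow b (t + σ * I) := by
  have power : Continuous fun t : ℝ ↦ (t + σ * I : ℂ) ^ b :=
    .cpow (by fun_prop) continuous_const (ofReal_add_mul_I_mem_slitPlane hσ)
  unfold gaussianCpow
  fun_prop

theorem norm_gaussianCpow_line_le (hσ : σ ≠ 0) (b : ℂ) (t : ℝ) :
    ‖gaussianCpow b (t + σ * I)‖ ≤ Real.exp ((σ ^ 2 - t ^ 2) / 2) *
      Real.exp ((|Real.log σ| + ‖(t + σ * I : ℂ)‖ + Real.pi) * ‖b‖) := by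
  have gaussian : ‖cexp (-(t + σ * I : ℂ) ^ 2 / 2)‖ = Real.exp ((σ ^ 2 - t ^ 2) / 2) := by
    rw [norm_exp]
    congr 1
    simp [pow_two]
  have height_le : |σ| ≤ ‖(t + σ * I : ℂ)‖ := by
    simpa using abs_im_le_norm (t + σ * I : ℂ)
  rw [gaussianCpow, norm_mul, gaussian]
  gcongr
  simpa only [Real.log_abs] using norm_cpow_le_exp_of_le_norm (abs_pos.2 hσ) height_le b

theorem integrable_exp_mul_norm_mul_norm_gaussianCpow (hσ : σ ≠ 0) (b : ℂ) (r : ℝ) :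
    Integrable fun t : ℝ ↦
      Real.exp (r * ‖(t + σ * I : ℂ)‖) * ‖gaussianCpow b (t + σ * I)‖ := by
  set K := σ ^ 2 / 2 + (|Real.log σ| + Real.pi) * ‖b‖ + (|r| + ‖b‖) * |σ| with hK
  have majorant :=
    (integrable_exp_mul_abs_sub_sq_div_two (|r| + ‖b‖)).const_mul (Real.exp K)
  refine majorant.mono' ?_ (.of_forall fun t ↦ ?_)
  · have := continuous_gaussianCpow_line hσ b
    exact Continuous.aestronglyMeasurable (by fun_prop)
  · have norm_le : ‖(t + σ * I : ℂ)‖ ≤ |t| + |σ| := by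
      simpa using norm_add_le (t : ℂ) (σ * I)
    rw [norm_mul, norm_norm, Real.norm_eq_abs, Real.abs_exp]
    calc Real.exp (r * ‖(t + σ * I : ℂ)‖) * ‖gaussianCpow b (t + σ * I)‖
        ≤ Real.exp (|r| * (|t| + |σ|)) * (Real.exp ((σ ^ 2 - t ^ 2) / 2) *
            Real.exp ((|Real.log σ| + (|t| + |σ|) + Real.pi) * ‖b‖)) := by
          gcongr
          · exact le_abs_self r
          · exact (norm_gaussianCpow_line_le hσ b t).trans (by gcongr)
      _ = Real.exp K * Real.exp ((|r| + ‖b‖) * |t| - t ^ 2 / 2) := by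
          simp only [← Real.exp_add, hK]
          ring_nf

/-- The contour integral `∫ exp(zs) exp(-s²/2) s^b ds` along the horizontal line `ℝ + σi`; it is
`exp(z²/4) U_{b + 1/2}(z)`, and satisfies a Hermite equation in `z`. -/
noncomputable def hermiteIntegral (σ : ℝ) (b z : ℂ) : ℂ :=
  ∫ t : ℝ, hermiteIntegrand b z (t + σ * I)

theorem integrable_hermiteIntegrand (hσ : σ ≠ 0) (b z : ℂ) :
    Integrable fun t : ℝ ↦ hermiteIntegrand b z (t + σ * I) :=
  integrable_cexp_mul_smul (Continuous.aestronglyMeasurable (by fun_prop))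
    (continuous_gaussianCpow_line hσ b).aestronglyMeasurable
    (integrable_exp_mul_norm_mul_norm_gaussianCpow hσ b) z

theorem hasDerivAt_hermiteIntegral (hσ : σ ≠ 0) (b z : ℂ) :
    HasDerivAt (hermiteIntegral σ b) (hermiteIntegral σ (b + 1) z) z := by
  have deriv_under_integral := hasDerivAt_integral_cexp_mul_smul (f := fun t : ℝ ↦ (t + σ * I : ℂ))
    (Continuous.aestronglyMeasurable (by fun_prop))
    (continuous_gaussianCpow_line hσ b).aestronglyMeasurable
    (integrable_exp_mul_norm_mul_norm_gaussianCpow hσ b) z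
  have weight_add_one (t : ℝ) := gaussianCpow_add_one b
    (slitPlane_ne_zero (ofReal_add_mul_I_mem_slitPlane hσ t))
  simp only [hermiteIntegral, hermiteIntegrand, weight_add_one]
  exact deriv_under_integral

theorem hermiteIntegral_add_two (hσ : σ ≠ 0) (b z : ℂ) :
    hermiteIntegral σ (b + 1 + 1) z =
      z * hermiteIntegral σ (b + 1) z + (b + 1) * hermiteIntegral σ b z := by
  have deriv_line (t : ℝ) := ((hasDerivAt_hermiteIntegrand_add_one b z
    (ofReal_add_mul_I_mem_slitPlane hσ t)).comp_add_const (t : ℂ) (σ * I)).comp_ofReal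
  have int₀ := (integrable_hermiteIntegrand hσ b z).const_mul (b + 1)
  have int₁ := (integrable_hermiteIntegrand hσ (b + 1) z).const_mul z
  have int₂ := integrable_hermiteIntegrand hσ (b + 1 + 1) z
  have int₁₀ := int₁.fun_add int₀
  have integral_deriv := integral_eq_zero_of_hasDerivAt_of_integrable deriv_line (int₁₀.sub int₂)
    (integrable_hermiteIntegrand hσ (b + 1) z)
  rw [integral_sub int₁₀ int₂, integral_add int₁ int₀, integral_const_mul, integral_const_mul]
    at integral_deriv
  exact (sub_eq_zero.1 integral_deriv).symm

theorem Upc_eq_cexp_mul_hermiteIntegral (hσ : σ ≠ 0) (a : ℂ) :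
    Upc σ a = fun z ↦ cexp (-z ^ 2 / 4) * hermiteIntegral σ (a - 1 / 2) z := by
  funext z
  simp only [Upc, hermiteIntegral, hermiteIntegrand, gaussianCpow]
  congr 2 with t
  rw [cpow_def_of_ne_zero (slitPlane_ne_zero (ofReal_add_mul_I_mem_slitPlane hσ t)),
    mul_comm (log _), neg_div, sub_eq_add_neg (z * _), Complex.exp_add, mul_assoc]

theorem Upc_entire_and_weber_general (a : ℂ) (hσ : σ ≠ 0) :
    Differentiable ℂ (Upc σ a) ∧
      ∀ z : ℂ, deriv (deriv (Upc σ a)) z = (z ^ 2 / 4 + a) * Upc σ a z := by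
  have hF := hasDerivAt_hermiteIntegral hσ (a - 1 / 2)
  have hF' := hasDerivAt_hermiteIntegral hσ (a - 1 / 2 + 1)
  rw [Upc_eq_cexp_mul_hermiteIntegral hσ a]
  refine ⟨fun z ↦ ((hasDerivAt_cexp_neg_sq_div_four z).mul (hF z)).differentiableAt, fun z ↦ ?_⟩
  rw [deriv_deriv_cexp_neg_sq_div_four_mul hF hF', hermiteIntegral_add_two hσ]
  ring

end HorizontalLine

/-- The parabolic cylinder functions U_a^± are entire and satisfy the Weber
equation (U_a^±)''(z) = (z²/4 + a)·U_a^±(z). -/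
theorem Upc_entire_and_weber (a : ℂ) (σ : ℝ) (hσ : σ = 1 ∨ σ = -1) :
    Differentiable ℂ (Upc σ a) ∧
      ∀ z : ℂ, deriv (deriv (Upc σ a)) z = (z^2/4 + a) * Upc σ a z := by
  exact Upc_entire_and_weber_general a (by rcases hσ with rfl | rfl <;> norm_num)
end

section
/- Let α ∈ (0, π), ρ ≥ 0 and β, δ ∈ [−π, π]. Then for every u ∈ ℝ with u ≠ 0, | h(u)/u² − cos(2α + δ) + ρ·sin(α + β)/(2·sin α) | ≤ ρ/(2·sin α). -/
/-!
Put `ζ = exp (-iα)`. Then `cos (2α + β) I₁(u) + cos (α + β) I₂(u)` is the real part of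
`exp (i(α + β)) ∫₀ᵘ s / (s + ζ) ds`. As `s` runs over the reals, `1 / (s + ζ)` stays on the circle
of centre `-i / (2 Im ζ)` and radius `1 / (2 |Im ζ|)`. Replacing `1 / (s + ζ)` by the centre
produces the term `ρ sin (α + β) / (2 sin α)`, and the radius bounds the error.
-/

open Complex MeasureTheory Set
open scoped ComplexConjugate

theorem norm_inv_add_I_div_two_mul_im {z : ℂ} (hz : z.im ≠ 0) :
    ‖z⁻¹ + I / (2 * z.im)‖ = 1 / (2 * |z.im|) := by
  have hz₀ : z ≠ 0 := fun h => hz (by simp [h])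
  have him : (z.im : ℂ) ≠ 0 := ofReal_ne_zero.mpr hz
  have hconj : 2 * (z.im : ℂ) + I * z = I * conj z := by
    have hsub := sub_conj z
    push_cast at hsub
    linear_combination I * hsub + 2 * (z.im : ℂ) * I_sq
  have hquot : z⁻¹ + I / (2 * z.im) = I * conj z / (z * (2 * z.im)) := by
    rw [← hconj]
    field_simp
  rw [hquot, norm_div, norm_mul, norm_mul, norm_mul, norm_I, norm_conj, norm_real,
    Real.norm_eq_abs, norm_ofNat, one_mul, div_mul_cancel_left₀ (norm_ne_zero_iff.mpr hz₀), one_div]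

theorem norm_integral_sub_pow_smul_le_of_norm_le {E : Type*} [NormedAddCommGroup E]
    [NormedSpace ℝ E] {f : ℝ → E} {M a b : ℝ} (hf : ∀ s ∈ uIoc a b, ‖f s‖ ≤ M) (n : ℕ) :
    ‖∫ s in a..b, (s - a) ^ n • f s‖ ≤ M * (|b - a| ^ (n + 1) / (n + 1)) := by
  have hle : ∀ s ∈ uIoc a b, ‖(s - a) ^ n • f s‖ ≤ M * |s - a| ^ n := fun s hs => by
    rw [norm_smul, norm_pow, Real.norm_eq_abs, mul_comm]
    exact mul_le_mul_of_nonneg_right (hf s hs) (by positivity)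
  calc ‖∫ s in a..b, (s - a) ^ n • f s‖
      = ‖∫ s in uIoc a b, (s - a) ^ n • f s‖ := intervalIntegral.norm_intervalIntegral_eq _ _ _ _
    _ ≤ ∫ s in uIoc a b, M * |s - a| ^ n :=
        norm_integral_le_of_norm_le
          (Continuous.integrableOn_uIoc (by fun_prop))
          ((ae_restrict_iff' measurableSet_uIoc).mpr (.of_forall hle))
    _ = M * (|b - a| ^ (n + 1) / (n + 1)) := by
        rw [integral_const_mul, integral_pow_abs_sub_uIoc]

section

variable {ζ : ℂ} (hζ : ζ.im ≠ 0)
include hζ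

theorem ofReal_add_ne_zero_of_im_ne_zero (s : ℝ) : (s : ℂ) + ζ ≠ 0 := fun h =>
  hζ (by simpa using congrArg im h)

theorem norm_integral_ofReal_div_ofReal_add_add_le (u : ℝ) :
    ‖(∫ s in (0 : ℝ)..u, (s : ℂ) / (s + ζ)) + I / (2 * ζ.im) * (u ^ 2 / 2)‖
      ≤ u ^ 2 / (4 * |ζ.im|) := by
  have hcircle (s : ℝ) : ‖((s : ℂ) + ζ)⁻¹ + I / (2 * ζ.im)‖ = 1 / (2 * |ζ.im|) := by
    have him : ((s : ℂ) + ζ).im = ζ.im := by rw [add_im, ofReal_im, zero_add]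
    rw [← him] at hζ ⊢
    exact norm_inv_add_I_div_two_mul_im hζ
  have hsplit : (∫ s in (0 : ℝ)..u, s • (((s : ℂ) + ζ)⁻¹ + I / (2 * ζ.im)))
      = (∫ s in (0 : ℝ)..u, (s : ℂ) / (s + ζ)) + I / (2 * ζ.im) * (u ^ 2 / 2) := by
    have hint : IntervalIntegrable (fun s : ℝ => (s : ℂ) / (s + ζ)) volume 0 u :=
      (Continuous.div (by fun_prop) (by fun_prop)
        (ofReal_add_ne_zero_of_im_ne_zero hζ)).intervalIntegrable _ _
    have hid : ∫ s in (0 : ℝ)..u, (s : ℂ) = u ^ 2 / 2 := by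
      rw [intervalIntegral.integral_ofReal, integral_id]
      push_cast
      ring
    rw [← hid, ← intervalIntegral.integral_const_mul, ← intervalIntegral.integral_add hint
      (Continuous.intervalIntegrable (by fun_prop) _ _)]
    congr 1 with s
    rw [real_smul]
    ring
  have hbound := norm_integral_sub_pow_smul_le_of_norm_le (a := 0) (b := u)
    (fun s _ => (hcircle s).le) 1
  simp only [sub_zero, pow_one, hsplit] at hbound
  refine hbound.trans_eq ?_
  rw [← sq_abs u]
  push_cast
  ring

theorem integral_ofReal_div_ofReal_add (u : ℝ) :
    ∫ s in (0 : ℝ)..u, (s : ℂ) / (s + ζ)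
      = conj ζ * (∫ s in (0 : ℝ)..u, s / normSq (s + ζ) : ℝ)
        + (∫ s in (0 : ℝ)..u, s ^ 2 / normSq (s + ζ) : ℝ) := by
  have hint (n : ℕ) :
      IntervalIntegrable (fun s : ℝ => ((s ^ n / normSq (s + ζ) : ℝ) : ℂ)) volume 0 u :=
    (continuous_ofReal.comp (Continuous.div (by fun_prop) (by fun_prop) fun s =>
      normSq_eq_zero.not.mpr (ofReal_add_ne_zero_of_im_ne_zero hζ s))).intervalIntegrable _ _
  rw [← intervalIntegral.integral_ofReal, ← intervalIntegral.integral_ofReal,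
    ← intervalIntegral.integral_const_mul, ← intervalIntegral.integral_add
      (by simpa only [pow_one] using (hint 1).const_mul (conj ζ)) (hint 2)]
  congr 1 with s
  rw [div_eq_mul_inv, inv_def, map_add, conj_ofReal]
  push_cast
  ring

end

theorem normSq_ofReal_add_exp_neg_mul_I (α s : ℝ) :
    normSq (s + exp ((-α : ℝ) * I)) = 1 + s ^ 2 + 2 * s * Real.cos α := by
  rw [normSq_apply, add_re, add_im, ofReal_re, ofReal_im, exp_ofReal_mul_I_re,
    exp_ofReal_mul_I_im, Real.cos_neg, Real.sin_neg]
  linear_combination Real.sin_sq_add_cos_sq α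

theorem cos_mul_integral_add_cos_mul_integral_eq_re {α : ℝ} (hα : Real.sin α ≠ 0) (β u : ℝ) :
    Real.cos (2 * α + β) * (∫ s in (0 : ℝ)..u, s / (1 + s ^ 2 + 2 * s * Real.cos α))
        + Real.cos (α + β) * (∫ s in (0 : ℝ)..u, s ^ 2 / (1 + s ^ 2 + 2 * s * Real.cos α))
      = (exp ((α + β : ℝ) * I)
          * ∫ s in (0 : ℝ)..u, (s : ℂ) / (s + exp ((-α : ℝ) * I))).re := by
  have him : (exp ((-α : ℝ) * I)).im ≠ 0 := by
    rwa [exp_ofReal_mul_I_im, Real.sin_neg, neg_ne_zero]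
  have hrot : exp ((α + β : ℝ) * I) * conj (exp ((-α : ℝ) * I))
      = exp ((2 * α + β : ℝ) * I) := by
    rw [← exp_conj, ← exp_add, map_mul, conj_ofReal, conj_I]
    push_cast
    ring_nf
  simp_rw [integral_ofReal_div_ofReal_add him, normSq_ofReal_add_exp_neg_mul_I]
  rw [mul_add, ← mul_assoc, hrot, add_re, re_mul_ofReal, re_mul_ofReal, exp_ofReal_mul_I_re,
    exp_ofReal_mul_I_re]

theorem abs_cos_mul_integral_add_cos_mul_integral_add_le {α : ℝ} (hα : Real.sin α ≠ 0)
    (β u : ℝ) :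
    |Real.cos (2 * α + β) * (∫ s in (0 : ℝ)..u, s / (1 + s ^ 2 + 2 * s * Real.cos α))
        + Real.cos (α + β) * (∫ s in (0 : ℝ)..u, s ^ 2 / (1 + s ^ 2 + 2 * s * Real.cos α))
        + Real.sin (α + β) / (2 * Real.sin α) * (u ^ 2 / 2)|
      ≤ u ^ 2 / (4 * |Real.sin α|) := by
  set ζ := exp ((-α : ℝ) * I)
  have him : ζ.im = -Real.sin α := by rw [exp_ofReal_mul_I_im, Real.sin_neg]
  have hcentre : Real.sin (α + β) / (2 * Real.sin α) * (u ^ 2 / 2)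
      = (exp ((α + β : ℝ) * I) * (I / (2 * ζ.im) * (u ^ 2 / 2))).re := by
    have hcast : I / (2 * ζ.im) * (u ^ 2 / 2)
        = I * ((1 / (2 * ζ.im) * (u ^ 2 / 2) : ℝ) : ℂ) := by
      push_cast
      ring
    rw [hcast, ← mul_assoc, re_mul_ofReal, mul_I_re, exp_ofReal_mul_I_im, him]
    ring
  rw [cos_mul_integral_add_cos_mul_integral_eq_re hα, hcentre, ← add_re, ← mul_add]
  refine (abs_re_le_norm _).trans ?_
  rw [norm_mul, norm_exp_ofReal_mul_I, one_mul, ← abs_neg (Real.sin α), ← him]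
  exact norm_integral_ofReal_div_ofReal_add_add_le (him ▸ neg_ne_zero.mpr hα) u

theorem h_over_u_sq_estimate_general {α : ℝ} (hα : Real.sin α ≠ 0) (ρ β δ : ℝ) {u : ℝ}
    (hu : u ≠ 0) :
    |(Real.cos (2 * α + δ) * u ^ 2 +
        2 * ρ * (Real.cos (2 * α + β)
            * (∫ s in (0 : ℝ)..u, s / (1 + s ^ 2 + 2 * s * Real.cos α)) +
          Real.cos (α + β)
            * (∫ s in (0 : ℝ)..u, s ^ 2 / (1 + s ^ 2 + 2 * s * Real.cos α)))) / u ^ 2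
      - Real.cos (2 * α + δ) + ρ * Real.sin (α + β) / (2 * Real.sin α)|
      ≤ |ρ| / (2 * |Real.sin α|) := by
  have hbound := abs_cos_mul_integral_add_cos_mul_integral_add_le hα β u
  set I₁ := ∫ s in (0 : ℝ)..u, s / (1 + s ^ 2 + 2 * s * Real.cos α)
  set I₂ := ∫ s in (0 : ℝ)..u, s ^ 2 / (1 + s ^ 2 + 2 * s * Real.cos α)
  calc _ = |2 * ρ / u ^ 2 * (Real.cos (2 * α + β) * I₁ + Real.cos (α + β) * I₂
          + Real.sin (α + β) / (2 * Real.sin α) * (u ^ 2 / 2))| := by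
        congr 1
        field_simp
        ring
    _ ≤ |2 * ρ / u ^ 2| * (u ^ 2 / (4 * |Real.sin α|)) := by
        rw [abs_mul]
        gcongr
    _ = |ρ| / (2 * |Real.sin α|) := by
        rw [abs_div, abs_mul, abs_two, abs_sq]
        field_simp
        ring

/-- Lemma 3.1: a quantitative bound for the function h built from the integrals
I₁, I₂ appearing in the WKB analysis of the parabolic cylinder integral. -/
theorem h_over_u_sq_estimate
    (α ρ β δ : ℝ) (hα : α ∈ Set.Ioo 0 Real.pi) (hρ : 0 ≤ ρ)
    (hβ : β ∈ Set.Icc (-Real.pi) Real.pi) (hδ : δ ∈ Set.Icc (-Real.pi) Real.pi)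
    (u : ℝ) (hu : u ≠ 0) :
    |(Real.cos (2*α + δ) * u ^ 2 +
        2 * ρ * (Real.cos (2*α + β) * (∫ s in (0:ℝ)..u, s / (1 + s^2 + 2*s*Real.cos α)) +
          Real.cos (α + β) * (∫ s in (0:ℝ)..u, s^2 / (1 + s^2 + 2*s*Real.cos α)))) / u ^ 2
      - Real.cos (2*α + δ) + ρ * Real.sin (α + β) / (2 * Real.sin α)|
      ≤ ρ / (2 * Real.sin α) := by
  have hsin : 0 < Real.sin α := Real.sin_pos_of_mem_Ioo hα
  simpa only [abs_of_nonneg hρ, abs_of_pos hsin] using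
    h_over_u_sq_estimate_general hsin.ne' ρ β δ hu
end
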